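/- Let 𝕏 be a σ-finite measure space and ℳ, 𝒩 Banach L^0(𝕏)-modules. For any tensor α = Σ_{i=1}^n v_i ⊗ w_i ∈ ℳ ⊗ 𝒩, the operators L_α : ℳ* → 𝒩 defined by L_α(ω) := Σ_{i=1}^n ω(v_i)·w_i and R_α : 𝒩* → ℳ defined by R_α(η) := Σ_{i=1}^n η(w_i)·v_i are well defined (independent of the chosen representation of α) and belong to Hom(ℳ*;𝒩) and Hom(𝒩*;ℳ) respectively. Moreover, the maps α ↦ L_α and α ↦ R_α satisfy |L_α| = |R_α| = |α|_ε on ℳ ⊗ 𝒩, and hence extend uniquely to pointwise-norm-preserving homomorphisms defined on the injective tensor product ℳ ⊗̂_ε 𝒩, with values in Hom(ℳ*;𝒩) and Hom(𝒩*;ℳ) respectively. -/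

import Mathlib

/-!
For a fixed `ω ∈ ℳ*`, the assignment `v ⊗ w ↦ ω(v) • w` is `L⁰`-bilinear, so it defines a linear
map `Lop N ω` on the algebraic tensor product; this gives the independence of `L_α(ω)` from the
representation of `α`.

The norm identity `|L_α| = |α|_ε` rests on the Hahn–Banach theorem for `L⁰`-modules
(`exists_norming`): every `w ∈ 𝒩` admits `η` in the unit disc of `𝒩*` with `η(w) = |w|`. Since
`∑ ω(v_i) η(w_i) = η(L_α(ω))`, the injective norm is the supremum of `|L_α(ω)|` over the unit disc
of `ℳ*`, and a general `ω` is `|ω|` times an element of the disc (`exists_disc`), where division by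
`|ω|` is the pointwise one with value `0` on `{|ω| = 0}`. Hahn–Banach is proved by Zorn's lemma.
Its one-step extension (`hb_const`) uses that `L⁰` is Dedekind complete (`exists_isLUB`), which
is deduced from the completeness of the lattice of measures and the Radon–Nikodym theorem.
Scalars are not invertible in `L⁰`, so the step is localized to the sets where the coefficient
is positive, negative or zero.

The extension to `ℳ ⊗̂_ε 𝒩` is the extension of a bounded operator by density
(`exists_extension`, `additive_ext`), applied separately for every `ω`; linearity in `ω` and
uniqueness follow because bounded additive maps agreeing on a dense image coincide, and the norm is
preserved by approximation (`pn_le_of_Lext`). Convergence is handled through sequences that tend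
to `0` in the distance of `L⁰` (`Null`). The statements on `R_α` are those on `L_α` for the swapped
tensor product.
-/

open MeasureTheory Filter Set TensorProduct

noncomputable section

namespace Paper

variable {X : Type*} [MeasurableSpace X]

/-- The space `L⁰(𝕏)` of real-valued measurable functions up to `μ`-a.e. equality. -/
abbrev L0 (μ : Measure X) : Type _ := X →ₘ[μ] ℝ

instance (μ : Measure X) : CommRing (L0 μ) :=
  { (inferInstance : AddCommGroup (L0 μ)), (inferInstance : CommMonoid (L0 μ)) with
    left_distrib := fun a b c => AEEqFun.toGerm_injective <| by
      simp only [AEEqFun.mul_toGerm, AEEqFun.add_toGerm, mul_add]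
    right_distrib := fun a b c => AEEqFun.toGerm_injective <| by
      simp only [AEEqFun.mul_toGerm, AEEqFun.add_toGerm, add_mul]
    zero_mul := fun a => AEEqFun.toGerm_injective <| by
      simp only [AEEqFun.mul_toGerm, AEEqFun.zero_toGerm, zero_mul]
    mul_zero := fun a => AEEqFun.toGerm_injective <| by
      simp only [AEEqFun.mul_toGerm, AEEqFun.zero_toGerm, mul_zero] }

/-- The distance on `L⁰(𝕏)` inducing the topology of convergence in measure, defined through
the auxiliary finite measure `μ.toFinite` (which satisfies `μ ≪ μ.toFinite ≪ μ`). -/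
noncomputable def dL0 (μ : Measure X) [SFinite μ] (f g : L0 μ) : ℝ :=
  ∫ x, min |f x - g x| 1 ∂(μ.toFinite)

/-- A Banach `L⁰(𝕏)`-module: a module over `L⁰(𝕏)` endowed with a pointwise norm, complete
with respect to the induced distance. -/
class BanachMod (μ : Measure X) [SFinite μ] (M : Type*) [AddCommGroup M]
    [Module (L0 μ) M] where
  pn : M → L0 μ
  pn_nonneg : ∀ v : M, 0 ≤ pn v
  pn_eq_zero : ∀ v : M, pn v = 0 ↔ v = 0
  pn_add_le : ∀ v w : M, pn (v + w) ≤ pn v + pn w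
  pn_smul : ∀ (f : L0 μ) (v : M), pn (f • v) = |f| * pn v
  complete : ∀ u : ℕ → M,
    (∀ ε : ℝ, 0 < ε → ∃ N : ℕ, ∀ m ≥ N, ∀ n ≥ N, dL0 μ (pn (u m - u n)) 0 < ε) →
    ∃ v : M, Tendsto (fun n => dL0 μ (pn (u n - v)) 0) atTop (nhds 0)

/-- The pointwise norm of a Banach `L⁰(𝕏)`-module, with the measure explicit. -/
noncomputable def pn (μ : Measure X) [SFinite μ] {M : Type*} [AddCommGroup M]
    [Module (L0 μ) M] [BanachMod μ M] (v : M) : L0 μ :=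
  BanachMod.pn v

/-- The distance on a Banach `L⁰(𝕏)`-module. -/
noncomputable def dM (μ : Measure X) [SFinite μ] {M : Type*} [AddCommGroup M]
    [Module (L0 μ) M] [BanachMod μ M] (v w : M) : ℝ :=
  dL0 μ (pn μ (v - w)) 0

section Defs

variable (μ : Measure X) [SFinite μ]
variable {M N : Type*} [AddCommGroup M] [Module (L0 μ) M] [BanachMod μ M]
  [AddCommGroup N] [Module (L0 μ) N] [BanachMod μ N]

/-- The set of admissible bounds of a map between Banach `L⁰(𝕏)`-modules; the pointwise norm
`|T|` of a homomorphism is the infimum of this set. -/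
def homBddSet (T : M → N) : Set (L0 μ) :=
  {g | 0 ≤ g ∧ ∀ v, pn μ (T v) ≤ g * pn μ v}

/-- A homomorphism of Banach `L⁰(𝕏)`-modules: an `L⁰(𝕏)`-linear map admitting a bound
`g ∈ L⁰(𝕏)⁺` with `|T v| ≤ g |v|` (equivalently, `L⁰(𝕏)`-linear and continuous). -/
def IsHom (T : M →ₗ[L0 μ] N) : Prop :=
  ∃ g, g ∈ homBddSet μ (⇑T)

/-- The set of admissible bounds of an `L⁰(𝕏)`-valued map (for elements of the dual module). -/
def dualBddSet (ω : M → L0 μ) : Set (L0 μ) :=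
  {g | 0 ≤ g ∧ ∀ v, |ω v| ≤ g * pn μ v}

/-- Membership in the dual module `ℳ*`: an `L⁰(𝕏)`-linear map `ω : ℳ → L⁰(𝕏)` admitting a
bound `g ∈ L⁰(𝕏)⁺` with `|ω v| ≤ g |v|`. -/
def IsDual (ω : M →ₗ[L0 μ] L0 μ) : Prop :=
  ∃ g, g ∈ dualBddSet μ (⇑ω)

/-- Membership in the unit disc `𝔻_{ℳ*}` of the dual module: `|ω| ≤ 1`, equivalently
`|ω v| ≤ |v|` for every `v`. -/
def InDualDisc (ω : M →ₗ[L0 μ] L0 μ) : Prop :=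
  ∀ v, |ω v| ≤ pn μ v

/-- The family of pointwise norms `|s - ∑_{i ∈ F ∪ G} v i|` for `G` finite disjoint from `F`,
whose `F`-indexed inf-sup being `0` defines `s = ∑_{i∈I} v i`. -/
def sumUB {I : Type*} (v : I → M) (s : M) (F : Finset I) : Set (L0 μ) :=
  {g | ∃ G : Finset I, Disjoint G F ∧ g = pn μ (s - (∑ i ∈ F, v i + ∑ i ∈ G, v i))}

/-- `HasSumMod μ v s` means that the family `{v_i}` is summable in the Banach `L⁰(𝕏)`-module
with sum `s`, i.e. `⋀_F ⋁_G |s - ∑_{i ∈ F ∪ G} v_i| = 0` (the inner suprema being the values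
of `b`, and the outer infimum being `0`). -/
def HasSumMod {I : Type*} (v : I → M) (s : M) : Prop :=
  ∃ b : Finset I → L0 μ, (∀ F, IsLUB (sumUB μ v s F) (b F)) ∧ IsGLB (Set.range b) 0

/-- A family in a Banach `L⁰(𝕏)`-module is summable if it has a sum. -/
def SummableMod {I : Type*} (v : I → M) : Prop :=
  ∃ s, HasSumMod μ v s

/-- The partial sums `∑_{i ∈ F} |v i|` of the pointwise norms of a family; the element `|v|₁`
of `ℓ₁(I, ℳ)` is the supremum of this set. -/
def l1PartialSums {I : Type*} (v : I → M) : Set (L0 μ) :=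
  {g | ∃ F : Finset I, g = ∑ i ∈ F, pn μ (v i)}

/-- Membership in `ℓ₁(I, ℳ)`: the partial sums of the pointwise norms admit a supremum
(equivalently, an upper bound) in `L⁰(𝕏)`. -/
def Meml1 {I : Type*} (v : I → M) : Prop :=
  ∃ b, IsLUB (l1PartialSums μ v) b

/-- The partial sums `∑_{i ∈ F} |v i|` for an `L⁰(𝕏)`-valued family. -/
def l1PartialSumsF {I : Type*} (v : I → L0 μ) : Set (L0 μ) :=
  {g | ∃ F : Finset I, g = ∑ i ∈ F, |v i|}

/-- Membership in `ℓ₁(I, L⁰(𝕏))`. -/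
def Meml1F {I : Type*} (v : I → L0 μ) : Prop :=
  ∃ b, IsLUB (l1PartialSumsF μ v) b

/-- The set whose infimum defines the projective pointwise norm: all values
`∑_{i=1}^n |v_i||w_i|` over representations `α = ∑_{i=1}^n v_i ⊗ w_i`. -/
def piReps (α : M ⊗[L0 μ] N) : Set (L0 μ) :=
  {g | ∃ (n : ℕ) (v : Fin n → M) (w : Fin n → N),
    α = ∑ i, v i ⊗ₜ[L0 μ] w i ∧ g = ∑ i, pn μ (v i) * pn μ (w i)}

/-- The set whose supremum defines the injective pointwise norm: all values
`|∑_{i=1}^n ω(v_i) η(w_i)|` over representations `α = ∑_{i=1}^n v_i ⊗ w_i` and elements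
`ω ∈ 𝔻_{ℳ*}`, `η ∈ 𝔻_{𝒩*}`. -/
def epsReps (α : M ⊗[L0 μ] N) : Set (L0 μ) :=
  {g | ∃ (n : ℕ) (v : Fin n → M) (w : Fin n → N)
    (ω : M →ₗ[L0 μ] L0 μ) (η : N →ₗ[L0 μ] L0 μ), InDualDisc μ ω ∧ InDualDisc μ η ∧
    α = ∑ i, v i ⊗ₜ[L0 μ] w i ∧ g = |∑ i, ω (v i) * η (w i)|}

/-- `IsPiTensor μ M N P e` states that the Banach `L⁰(𝕏)`-module `P`, together with the
`L⁰(𝕏)`-linear map `e` defined on the algebraic tensor product, realizes the projective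
tensor product `ℳ ⊗̂_π 𝒩`: the pointwise norm of `e α` is the projective pointwise norm
`|α|_π` and the image of `e` is dense. -/
structure IsPiTensor (M N P : Type*) [AddCommGroup M] [Module (L0 μ) M] [BanachMod μ M]
    [AddCommGroup N] [Module (L0 μ) N] [BanachMod μ N]
    [AddCommGroup P] [Module (L0 μ) P] [BanachMod μ P]
    (e : M ⊗[L0 μ] N →ₗ[L0 μ] P) : Prop where
  pn_emb : ∀ α : M ⊗[L0 μ] N, IsGLB (piReps μ α) (pn μ (e α))
  dense : ∀ p : P, ∀ ε : ℝ, 0 < ε → ∃ α : M ⊗[L0 μ] N, dM μ (e α) p < ε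

/-- `IsEpsTensor μ M N P e` states that the Banach `L⁰(𝕏)`-module `P`, together with the
`L⁰(𝕏)`-linear map `e` defined on the algebraic tensor product, realizes the injective
tensor product `ℳ ⊗̂_ε 𝒩`: the pointwise norm of `e α` is the injective pointwise norm
`|α|_ε` and the image of `e` is dense. -/
structure IsEpsTensor (M N P : Type*) [AddCommGroup M] [Module (L0 μ) M] [BanachMod μ M]
    [AddCommGroup N] [Module (L0 μ) N] [BanachMod μ N]
    [AddCommGroup P] [Module (L0 μ) P] [BanachMod μ P]
    (e : M ⊗[L0 μ] N →ₗ[L0 μ] P) : Prop where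
  pn_emb : ∀ α : M ⊗[L0 μ] N, IsLUB (epsReps μ α) (pn μ (e α))
  dense : ∀ p : P, ∀ ε : ℝ, 0 < ε → ∃ α : M ⊗[L0 μ] N, dM μ (e α) p < ε

end Defs


/-! ### Order and ring structure of `L⁰` -/

section L0Order

variable {μ : Measure X}

instance : IsOrderedAddMonoid (L0 μ) where
  add_le_add_left a b h c := by
    rw [← AEEqFun.coeFn_le] at h ⊢
    filter_upwards [h, AEEqFun.coeFn_add a c, AEEqFun.coeFn_add b c] with x h1 h2 h3
    simp only [h2, h3, Pi.add_apply]
    linarith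

lemma zero_ae : ((0 : L0 μ) : X → ℝ) =ᵐ[μ] 0 := AEEqFun.coeFn_zero

instance : ZeroLEOneClass (L0 μ) where
  zero_le_one := by
    rw [← AEEqFun.coeFn_le]
    filter_upwards [zero_ae (μ := μ), AEEqFun.coeFn_one (μ := μ) (β := ℝ)] with x h0 h1
    simp [h0, h1]

instance : IsOrderedRing (L0 μ) :=
  .of_mul_nonneg fun a b ha hb => by
    rw [← AEEqFun.coeFn_le] at ha hb ⊢
    filter_upwards [ha, hb, AEEqFun.coeFn_mul a b, zero_ae (μ := μ)] with x h1 h2 h3 h0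
    simp only [h3, h0, Pi.mul_apply, Pi.zero_apply] at h1 h2 ⊢
    positivity

lemma L0_abs_mul (a b : L0 μ) : |a * b| = |a| * |b| := by
  apply AEEqFun.ext
  filter_upwards [AEEqFun.coeFn_abs (a * b), AEEqFun.coeFn_mul a b, AEEqFun.coeFn_mul |a| |b|,
    AEEqFun.coeFn_abs a, AEEqFun.coeFn_abs b] with x h1 h2 h3 h4 h5
  simp only [h1, h2, h3, h4, h5, Pi.mul_apply, abs_mul]

lemma eq_zero_of_abs {a : L0 μ} (h : |a| = 0) : a = 0 :=
  le_antisymm (h ▸ le_abs_self a) (neg_nonpos.1 (h ▸ neg_le_abs a))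

/-- The pointwise inverse of `f ∈ L⁰`, with value `0` where `f` vanishes. -/
def pinv (f : L0 μ) : L0 μ := AEEqFun.compMeasurable (fun t : ℝ => t⁻¹) measurable_inv f

lemma pinv_ae (f : L0 μ) : ⇑(pinv f) =ᵐ[μ] fun x => (f x)⁻¹ :=
  AEEqFun.coeFn_compMeasurable _ _ _

lemma pinv_nonneg {f : L0 μ} (hf : 0 ≤ f) : 0 ≤ pinv f := by
  rw [← AEEqFun.coeFn_le] at hf ⊢
  filter_upwards [hf, pinv_ae f, zero_ae (μ := μ)] with x h1 h2 h0
  simp only [h2, h0, Pi.zero_apply] at h1 ⊢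
  positivity

lemma pinv_mul_self_mul (f : L0 μ) : f * pinv f * f = f := by
  apply AEEqFun.ext
  filter_upwards [AEEqFun.coeFn_mul (f * pinv f) f, AEEqFun.coeFn_mul f (pinv f),
    pinv_ae f] with x h1 h2 h3
  simp only [h1, h2, h3, Pi.mul_apply]
  simp

lemma mul_pinv_le_one (f : L0 μ) : f * pinv f ≤ 1 := by
  rw [← AEEqFun.coeFn_le]
  filter_upwards [AEEqFun.coeFn_mul f (pinv f), AEEqFun.coeFn_one (μ := μ) (β := ℝ),
    pinv_ae f] with x h1 h2 h3
  simp only [h1, h2, h3, Pi.mul_apply, Pi.one_apply]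
  exact mul_inv_le_one

/-- A lower bound of `S` multiplied by `c ≥ 0` is bounded by the infimum multiplied by `c`. -/
lemma le_glb_mul {S : Set (L0 μ)} {d c h : L0 μ} (hS : ∀ g ∈ S, 0 ≤ g) (hne : S.Nonempty)
    (hd : IsGLB S d) (hc : 0 ≤ c) (hh : ∀ g ∈ S, h ≤ g * c) : h ≤ d * c := by
  have key : h * pinv c ≤ d := by
    refine hd.2 fun g hg => ?_
    calc h * pinv c ≤ (g * c) * pinv c :=
          mul_le_mul_of_nonneg_right (hh g hg) (pinv_nonneg hc)
      _ = g * (c * pinv c) := by ring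
      _ ≤ g * 1 := mul_le_mul_of_nonneg_left (mul_pinv_le_one c) (hS g hg)
      _ = g := mul_one g
  obtain ⟨g, hg⟩ := hne
  have h1 := mul_le_mul_of_nonneg_right key hc
  -- on `{c = 0}` the hypothesis `h ≤ g * c` gives `h ≤ 0`
  have hz : 0 ≤ 1 - c * pinv c := sub_nonneg.2 (mul_pinv_le_one c)
  have h2 := mul_le_mul_of_nonneg_right (hh g hg) hz
  have h3 : g * c * (1 - c * pinv c) = 0 := by
    have : g * c * (1 - c * pinv c) = g * (c - c * pinv c * c) := by ring
    rw [this, pinv_mul_self_mul, sub_self, mul_zero]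
  rw [h3] at h2
  calc h = h * pinv c * c + h * (1 - c * pinv c) := by ring
    _ ≤ d * c + 0 := add_le_add h1 h2
    _ = d * c := add_zero _

end L0Order

/-! ### Dedekind completeness of `L⁰` -/

section Dedekind

variable {μ : Measure X}

lemma ae_le_of_withDensity_le [SigmaFinite μ] {f g : X → ENNReal} (hf : AEMeasurable f μ)
    (h : μ.withDensity f ≤ μ.withDensity g) : f ≤ᵐ[μ] g := by
  refine ae_le_of_forall_setLIntegral_le_of_sigmaFinite₀ hf fun s hs _ => ?_
  rw [← withDensity_apply _ hs, ← withDensity_apply _ hs]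
  exact h s

/-- The measure with density `exp f`. -/
def expMeas (f : L0 μ) : Measure X :=
  μ.withDensity fun x => ENNReal.ofReal (Real.exp (f x))

lemma aemeas_exp (f : L0 μ) : AEMeasurable (fun x => ENNReal.ofReal (Real.exp (f x))) μ :=
  (Real.measurable_exp.comp_aemeasurable f.aemeasurable).ennreal_ofReal

/-- Dedekind completeness of `L⁰`. The supremum of a bounded family is the logarithm of the
Radon-Nikodym density of the supremum, in the complete lattice of measures, of the measures
with densities `exp f`. -/
lemma exists_isLUB [SigmaFinite μ] {S : Set (L0 μ)} (hne : S.Nonempty) (hb : BddAbove S) :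
    ∃ b, IsLUB S b := by
  obtain ⟨u, hu⟩ := hb
  obtain ⟨f₀, hf₀⟩ := hne
  have hmono : ∀ f g : L0 μ, f ≤ g → expMeas f ≤ expMeas g := by
    intro f g h
    refine withDensity_mono ?_
    filter_upwards [AEEqFun.coeFn_le.2 h] with x hx
    exact ENNReal.ofReal_le_ofReal (Real.exp_le_exp.2 hx)
  set ν : Measure X := sSup (expMeas '' S) with hν
  have hνu : ∀ g ∈ upperBounds S, ν ≤ expMeas g := by
    intro g hg
    refine sSup_le ?_
    rintro _ ⟨f, hf, rfl⟩
    exact hmono f g (hg hf)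
  have hνl : ∀ f ∈ S, expMeas f ≤ ν := fun f hf => le_sSup ⟨f, hf, rfl⟩
  have hac : ν ≪ μ :=
    (Measure.absolutelyContinuous_of_le (hνu u hu)).trans (withDensity_absolutelyContinuous _ _)
  have : SigmaFinite (expMeas u) :=
    SigmaFinite.withDensity_ofReal (μ := μ) _
  have : SigmaFinite ν := Measure.sigmaFinite_of_le _ (hνu u hu)
  set ρ := ν.rnDeriv μ with hρ
  have hρν : μ.withDensity ρ = ν := Measure.withDensity_rnDeriv_eq _ _ hac
  have hρm : Measurable ρ := Measure.measurable_rnDeriv _ _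
  have hup : ∀ g ∈ upperBounds S, ρ ≤ᵐ[μ] fun x => ENNReal.ofReal (Real.exp (g x)) := by
    intro g hg
    refine ae_le_of_withDensity_le hρm.aemeasurable ?_
    rw [hρν]
    exact hνu g hg
  have hlo : ∀ f ∈ S, (fun x => ENNReal.ofReal (Real.exp (f x))) ≤ᵐ[μ] ρ := by
    intro f hf
    refine ae_le_of_withDensity_le (aemeas_exp f) ?_
    rw [hρν]
    exact hνl f hf
  have hbm : AEStronglyMeasurable (fun x => Real.log (ρ x).toReal) μ :=
    (Real.measurable_log.comp hρm.ennreal_toReal).aestronglyMeasurable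
  refine ⟨AEEqFun.mk _ hbm, fun f hf => ?_, fun g hg => ?_⟩
  · rw [← AEEqFun.coeFn_le]
    filter_upwards [AEEqFun.coeFn_mk _ hbm, hlo f hf, hup u hu] with x h1 h2 h3
    rw [h1, Real.le_log_iff_exp_le]
    · exact (ENNReal.ofReal_le_iff_le_toReal (ne_top_of_le_ne_top ENNReal.ofReal_ne_top h3)).1 h2
    · refine lt_of_lt_of_le (Real.exp_pos (f x)) ?_
      exact (ENNReal.ofReal_le_iff_le_toReal (ne_top_of_le_ne_top ENNReal.ofReal_ne_top h3)).1 h2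
  · rw [← AEEqFun.coeFn_le]
    filter_upwards [AEEqFun.coeFn_mk _ hbm, hlo f₀ hf₀, hup g hg] with x h1 h2 h3
    have h4 := (ENNReal.ofReal_le_iff_le_toReal
      (ne_top_of_le_ne_top ENNReal.ofReal_ne_top h3)).1 h2
    rw [h1, Real.log_le_iff_le_exp (lt_of_lt_of_le (Real.exp_pos _) h4)]
    exact ENNReal.toReal_le_of_le_ofReal (Real.exp_pos _).le h3

lemma exists_isGLB [SigmaFinite μ] {S : Set (L0 μ)} (hne : S.Nonempty) (hb : BddBelow S) :
    ∃ b, IsGLB S b := by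
  obtain ⟨b, hb⟩ := exists_isLUB (S := lowerBounds S) hb (hne.mono fun x hx _ hy => hy hx)
  exact ⟨b, isLUB_lowerBounds.1 hb⟩

end Dedekind

/-! ### Null sequences in `L⁰` -/

section Null

variable (μ : Measure X) [SFinite μ]

/-- Convergence to `0` in the distance of `L⁰`. -/
def Null (r : ℕ → L0 μ) : Prop := Tendsto (fun n => dL0 μ (r n) 0) atTop (nhds 0)

variable {μ}

lemma ae_fin {p : X → Prop} (h : ∀ᵐ x ∂μ, p x) : ∀ᵐ x ∂μ.toFinite, p x :=
  (toFinite_absolutelyContinuous μ).ae_le h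

lemma dL0_zero_eq (f : L0 μ) : dL0 μ f 0 = ∫ x, min |f x| 1 ∂(μ.toFinite) := by
  refine integral_congr_ae (ae_fin ?_)
  filter_upwards [zero_ae (μ := μ)] with x h0
  simp [h0]

lemma integrable_min (f : L0 μ) : Integrable (fun x => min |f x| 1) μ.toFinite := by
  refine Integrable.mono' (integrable_const (1 : ℝ)) ?_ (Eventually.of_forall fun x => ?_)
  · exact ((f.stronglyMeasurable.measurable.abs).min measurable_const).aestronglyMeasurable
  · rw [Real.norm_of_nonneg (by positivity)]
    exact min_le_right _ _

lemma dL0_nonneg (f : L0 μ) : 0 ≤ dL0 μ f 0 := by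
  rw [dL0_zero_eq]
  exact integral_nonneg fun x => by positivity

lemma dL0_mono {f g : L0 μ} (hf : 0 ≤ f) (h : f ≤ g) : dL0 μ f 0 ≤ dL0 μ g 0 := by
  rw [dL0_zero_eq, dL0_zero_eq]
  refine integral_mono_ae (integrable_min f) (integrable_min g) (ae_fin ?_)
  filter_upwards [AEEqFun.coeFn_le.2 hf, AEEqFun.coeFn_le.2 h, zero_ae (μ := μ)] with x h1 h2 h0
  simp only [h0, Pi.zero_apply] at h1
  exact min_le_min_right _ (abs_le_abs_of_nonneg h1 h2)

lemma dL0_add_le (f g : L0 μ) : dL0 μ (f + g) 0 ≤ dL0 μ f 0 + dL0 μ g 0 := by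
  rw [dL0_zero_eq, dL0_zero_eq, dL0_zero_eq, ← integral_add (integrable_min f) (integrable_min g)]
  refine integral_mono_ae (integrable_min _) ((integrable_min f).add (integrable_min g))
    (ae_fin ?_)
  filter_upwards [AEEqFun.coeFn_add f g] with x h1
  simp only [h1, Pi.add_apply]
  have := abs_add_le (f x) (g x)
  have := abs_nonneg (f x)
  have := abs_nonneg (g x)
  grind

lemma Null.add {r s : ℕ → L0 μ} (hr : Null μ r) (hs : Null μ s) :
    Null μ (fun n => r n + s n) := by
  refine squeeze_zero (fun _ => dL0_nonneg _) (fun _ => dL0_add_le _ _) ?_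
  simpa using Tendsto.add hr hs

lemma Null.mono {r s : ℕ → L0 μ} (hr : Null μ r) (h0 : ∀ n, 0 ≤ s n) (h : ∀ n, s n ≤ r n) :
    Null μ s :=
  squeeze_zero (fun _ => dL0_nonneg _) (fun n => dL0_mono (h0 n) (h n)) hr

/-- Multiplication by a fixed `d ∈ L⁰` preserves null sequences: `d` is bounded by a constant
off a set of small measure. -/
lemma Null.mul {r : ℕ → L0 μ} (hr : Null μ r) (d : L0 μ) : Null μ (fun n => r n * d) := by
  have hK : Tendsto (fun K : ℕ => ∫ x, ({x | (K : ℝ) < |d x|}.indicator 1 x : ℝ) ∂μ.toFinite)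
      atTop (nhds 0) := by
    have : (0 : ℝ) = ∫ x, (0 : ℝ) ∂μ.toFinite := by simp
    rw [this]
    refine tendsto_integral_of_dominated_convergence (fun _ => (1 : ℝ)) (fun K => ?_)
      (integrable_const _) (fun K => Eventually.of_forall fun x => ?_)
      (Eventually.of_forall fun x => ?_)
    · refine (measurable_one.indicator ?_).aestronglyMeasurable
      exact measurableSet_lt measurable_const d.stronglyMeasurable.measurable.abs
    · by_cases h : (K : ℝ) < |d x| <;> simp [h]
    · obtain ⟨K₀, hK₀⟩ := exists_nat_ge |d x|
      refine tendsto_const_nhds.congr' ?_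
      filter_upwards [eventually_ge_atTop K₀] with K hKK
      have : ¬ ((K : ℝ) < |d x|) := not_lt.2 (hK₀.trans (by exact_mod_cast hKK))
      simp [this]
  have hbd : ∀ (n : ℕ) (K : ℕ), dL0 μ (r n * d) 0 ≤ (K + 1) * dL0 μ (r n) 0 +
      ∫ x, ({x | (K : ℝ) < |d x|}.indicator 1 x : ℝ) ∂μ.toFinite := by
    intro n K
    have hi : Integrable (fun x => ({x | (K : ℝ) < |d x|}.indicator 1 x : ℝ)) μ.toFinite := by
      refine (integrable_const (1 : ℝ)).indicator ?_
      exact measurableSet_lt measurable_const d.stronglyMeasurable.measurable.abs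
    rw [dL0_zero_eq, dL0_zero_eq, ← integral_const_mul,
      ← integral_add ((integrable_min _).const_mul _) hi]
    refine integral_mono_ae (integrable_min _) (((integrable_min _).const_mul _).add hi)
      (ae_fin ?_)
    filter_upwards [AEEqFun.coeFn_mul (r n) d] with x h1
    simp only [h1, Pi.mul_apply, abs_mul]
    have h2 := abs_nonneg (r n x)
    have hK0 : (0 : ℝ) ≤ K := Nat.cast_nonneg K
    by_cases h : (K : ℝ) < |d x|
    · simp only [mem_ofPred_eq, h, indicator_of_mem, Pi.one_apply]
      have : 0 ≤ ((K : ℝ) + 1) * min |r n x| 1 := by positivity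
      have := min_le_right (|r n x| * |d x|) 1
      linarith
    · simp only [mem_ofPred_eq, h, not_false_eq_true, indicator_of_notMem, add_zero]
      push Not at h
      rcases le_total |r n x| 1 with h3 | h3
      · rw [min_eq_left h3]
        refine (min_le_left _ _).trans ?_
        nlinarith
      · rw [min_eq_right h3]
        refine (min_le_right _ _).trans ?_
        linarith
  rw [Null, Metric.tendsto_atTop]
  intro ε hε
  obtain ⟨K, hKε⟩ := ((hK.eventually (gt_mem_nhds (half_pos hε)))).exists
  have hr' : Tendsto (fun n => ((K : ℝ) + 1) * dL0 μ (r n) 0) atTop (nhds 0) := by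
    simpa using Tendsto.const_mul ((K : ℝ) + 1) hr
  obtain ⟨N, hN⟩ := eventually_atTop.1 (hr'.eventually (gt_mem_nhds (half_pos hε)))
  refine ⟨N, fun n hn => ?_⟩
  rw [Real.dist_eq, sub_zero, abs_of_nonneg (dL0_nonneg _)]
  have := hbd n K
  have := hN n hn
  linarith

lemma Null.le_zero {r : ℕ → L0 μ} (hr : Null μ r) {f : L0 μ} (h : ∀ n, f ≤ r n) : f ≤ 0 := by
  have h1 : dL0 μ (f ⊔ 0) 0 ≤ 0 := by
    have hr' : Tendsto (fun n => dL0 μ |r n| 0) atTop (nhds 0) := by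
      refine hr.congr fun n => ?_
      rw [dL0_zero_eq, dL0_zero_eq]
      refine integral_congr_ae (ae_fin ?_)
      filter_upwards [AEEqFun.coeFn_abs (r n)] with x hx
      simp [hx]
    refine ge_of_tendsto' hr' fun n => dL0_mono le_sup_right ?_
    exact sup_le ((h n).trans (le_abs_self _)) (abs_nonneg _)
  have h2 : ∫ x, min |(f ⊔ 0 : L0 μ) x| 1 ∂(μ.toFinite) = 0 := by
    rw [← dL0_zero_eq]
    exact le_antisymm h1 (dL0_nonneg _)
  rw [integral_eq_zero_iff_of_nonneg (fun x => by positivity) (integrable_min _)] at h2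
  rw [← AEEqFun.coeFn_le]
  have h3 := (absolutelyContinuous_toFinite μ).ae_le h2
  filter_upwards [h3, AEEqFun.coeFn_sup f 0, zero_ae (μ := μ)] with x h4 h5 h0
  simp only [h5, h0, Pi.zero_apply] at h4 ⊢
  by_contra hc
  push Not at hc
  rw [max_eq_left hc.le, abs_of_pos hc] at h4
  have : 0 < min (f x) 1 := by positivity
  linarith

lemma Null.le {r : ℕ → L0 μ} (hr : Null μ r) {f g : L0 μ} (h : ∀ n, f ≤ g + r n) : f ≤ g :=
  sub_nonpos.1 (hr.le_zero fun n => sub_le_iff_le_add'.2 (h n))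

end Null

/-! ### Elementary properties of the pointwise norm -/

section PnBasic

variable {μ : Measure X} [SFinite μ]
variable {M : Type*} [AddCommGroup M] [Module (L0 μ) M] [BanachMod μ M]

lemma pn_nonneg (v : M) : 0 ≤ pn μ v := BanachMod.pn_nonneg v

lemma pn_eq_zero {v : M} : pn μ v = 0 ↔ v = 0 := BanachMod.pn_eq_zero v

lemma pn_add_le (v w : M) : pn μ (v + w) ≤ pn μ v + pn μ w := BanachMod.pn_add_le v w

lemma pn_smul (f : L0 μ) (v : M) : pn μ (f • v) = |f| * pn μ v := BanachMod.pn_smul f v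

lemma pn_smul_of_nonneg {f : L0 μ} (hf : 0 ≤ f) (v : M) : pn μ (f • v) = f * pn μ v := by
  rw [pn_smul, abs_of_nonneg hf]

lemma pn_neg (v : M) : pn μ (-v) = pn μ v := by
  have h := pn_smul (-1 : L0 μ) v
  rwa [neg_one_smul, abs_neg, abs_of_nonneg zero_le_one, one_mul] at h

lemma pn_sub_comm (v w : M) : pn μ (v - w) = pn μ (w - v) := by
  rw [← pn_neg, neg_sub]

lemma pn_sub_le (u v w : M) : pn μ (u - w) ≤ pn μ (u - v) + pn μ (v - w) := by
  have := pn_add_le (μ := μ) (u - v) (v - w)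
  rwa [sub_add_sub_cancel] at this

lemma Null.eq_zero {r : ℕ → L0 μ} (hr : Null μ r) {v : M} (h : ∀ n, pn μ v ≤ r n) : v = 0 :=
  pn_eq_zero.1 (le_antisymm (hr.le_zero h) (pn_nonneg v))

end PnBasic

/-! ### The Hahn–Banach theorem for `L⁰`-modules -/

section HahnBanach

variable {μ : Measure X}

/-- A partition of unity `1 = p i + q j + z` adapted to the sign of `h`, where `p`, `q` are the
positive and negative parts of `h` and `i`, `j` are their pointwise inverses. -/
lemma sign_partition (h : L0 μ) : ∃ p q i j z : L0 μ, 0 ≤ p ∧ 0 ≤ q ∧ 0 ≤ i ∧ 0 ≤ j ∧ 0 ≤ z ∧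
    p * i + q * j + z = 1 ∧ p * i * h = p ∧ q * j * h = -q ∧ z * h = 0 := by
  have hp : (0 : L0 μ) ≤ h ⊔ 0 := le_sup_right
  have hq : (0 : L0 μ) ≤ (-h) ⊔ 0 := le_sup_right
  have e1 : (h ⊔ 0) * pinv (h ⊔ 0) * h = h ⊔ 0 := by
    apply AEEqFun.ext
    filter_upwards [AEEqFun.coeFn_mul ((h ⊔ 0) * pinv (h ⊔ 0)) h,
      AEEqFun.coeFn_mul (h ⊔ 0) (pinv (h ⊔ 0)), pinv_ae (h ⊔ 0), AEEqFun.coeFn_sup h 0,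
      zero_ae (μ := μ)] with x h1 h2 h3 h4 h0
    simp only [h1, h2, h3, h4, h0, Pi.mul_apply, Pi.zero_apply]
    rcases le_total (h x) 0 with hx | hx
    · simp [max_eq_right hx]
    · simp [max_eq_left hx]
  have e2 : ((-h) ⊔ 0) * pinv ((-h) ⊔ 0) * h = -((-h) ⊔ 0) := by
    apply AEEqFun.ext
    filter_upwards [AEEqFun.coeFn_mul (((-h) ⊔ 0) * pinv ((-h) ⊔ 0)) h,
      AEEqFun.coeFn_mul ((-h) ⊔ 0) (pinv ((-h) ⊔ 0)), pinv_ae ((-h) ⊔ 0),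
      AEEqFun.coeFn_sup (-h) 0, AEEqFun.coeFn_neg h, AEEqFun.coeFn_neg ((-h) ⊔ 0),
      zero_ae (μ := μ)] with x h1 h2 h3 h4 h5 h6 h0
    simp only [h1, h2, h3, h4, h5, h6, h0, Pi.mul_apply, Pi.zero_apply, Pi.neg_apply]
    rcases le_total (h x) 0 with hx | hx
    · rw [max_eq_left (by linarith)]
      rcases eq_or_ne (h x) 0 with h' | h'
      · simp [h']
      · field_simp
    · simp [max_eq_right (neg_nonpos.2 hx)]
  have e3 : (h ⊔ 0) * pinv (h ⊔ 0) + ((-h) ⊔ 0) * pinv ((-h) ⊔ 0) ≤ 1 := by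
    rw [← AEEqFun.coeFn_le]
    filter_upwards [AEEqFun.coeFn_add ((h ⊔ 0) * pinv (h ⊔ 0)) (((-h) ⊔ 0) * pinv ((-h) ⊔ 0)),
      AEEqFun.coeFn_mul (h ⊔ 0) (pinv (h ⊔ 0)), pinv_ae (h ⊔ 0), AEEqFun.coeFn_sup h 0,
      AEEqFun.coeFn_mul ((-h) ⊔ 0) (pinv ((-h) ⊔ 0)), pinv_ae ((-h) ⊔ 0),
      AEEqFun.coeFn_sup (-h) 0, AEEqFun.coeFn_neg h,
      AEEqFun.coeFn_one (μ := μ) (β := ℝ),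
      zero_ae (μ := μ)] with x h1 h2 h3 h4 h5 h6 h7 h8 h9 h0
    simp only [h1, h2, h3, h4, h5, h6, h7, h8, h9, h0, Pi.mul_apply, Pi.zero_apply, Pi.add_apply,
      Pi.neg_apply, Pi.one_apply]
    rcases le_total (h x) 0 with hx | hx
    · rw [max_eq_right hx]
      simpa using mul_inv_le_one
    · rw [max_eq_right (neg_nonpos.2 hx)]
      simpa using mul_inv_le_one
  have e4 : h = (h ⊔ 0) - ((-h) ⊔ 0) := by
    apply AEEqFun.ext
    filter_upwards [AEEqFun.coeFn_sub (h ⊔ 0) ((-h) ⊔ 0), AEEqFun.coeFn_sup h 0,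
      AEEqFun.coeFn_sup (-h) 0, AEEqFun.coeFn_neg h, zero_ae (μ := μ)] with x h1 h2 h3 h4 h0
    simp only [h1, h2, h3, h4, h0, Pi.zero_apply, Pi.sub_apply, Pi.neg_apply]
    grind
  refine ⟨h ⊔ 0, (-h) ⊔ 0, pinv (h ⊔ 0), pinv ((-h) ⊔ 0),
    1 - ((h ⊔ 0) * pinv (h ⊔ 0) + ((-h) ⊔ 0) * pinv ((-h) ⊔ 0)), hp, hq, pinv_nonneg hp,
    pinv_nonneg hq, sub_nonneg.2 e3, by ring, e1, e2, ?_⟩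
  rw [sub_mul, add_mul, e1, e2, one_mul, ← sub_eq_add_neg, ← e4, sub_self]

variable [SigmaFinite μ]
variable {N : Type*} [AddCommGroup N] [Module (L0 μ) N] [BanachMod μ N]

/-- One-step extension: `c` is an admissible value at `v` for an extension of `f` dominated by
the pointwise norm. It is the infimum of `|x + v| - f x` over the domain of `f`; the inequality
for a general coefficient `h` is obtained by localizing to `{h > 0}`, `{h < 0}`, `{h = 0}`. -/
lemma hb_const (f : N →ₗ.[L0 μ] L0 μ) (hf : ∀ x : f.domain, f x ≤ pn μ (x : N)) (v : N) :
    ∃ c : L0 μ, ∀ (x : f.domain) (h : L0 μ), f x + h * c ≤ pn μ ((x : N) + h • v) := by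
  have hkey : ∀ x y : f.domain, f y - pn μ ((y : N) - v) ≤ pn μ ((x : N) + v) - f x := by
    intro x y
    have h1 := hf (x + y)
    have h2 := pn_add_le (μ := μ) ((x : N) + v) ((y : N) - v)
    rw [show (x : N) + v + (y - v) = ((x + y : f.domain) : N) by push_cast; abel] at h2
    rw [LinearPMap.map_add] at h1
    rw [sub_le_iff_le_add, sub_add_eq_add_sub, le_sub_iff_add_le, add_comm (f y)]
    exact h1.trans h2
  obtain ⟨c, hc⟩ := exists_isGLB (S := range fun x : f.domain => pn μ ((x : N) + v) - f x)
    ⟨_, 0, rfl⟩ ⟨f 0 - pn μ (((0 : f.domain) : N) - v), by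
      rintro _ ⟨x, rfl⟩
      exact hkey x 0⟩
  have hc1 : ∀ x : f.domain, f x + c ≤ pn μ ((x : N) + v) := fun x => by
    have := hc.1 ⟨x, rfl⟩
    rwa [le_sub_iff_add_le, add_comm] at this
  have hc2 : ∀ y : f.domain, f y - c ≤ pn μ ((y : N) - v) := fun y => by
    have : f y - pn μ ((y : N) - v) ≤ c := hc.2 (by
      rintro _ ⟨x, rfl⟩
      exact hkey x y)
    rwa [sub_le_comm] at this
  refine ⟨c, fun x h => ?_⟩
  obtain ⟨p, q, i, j, z, hp, hq, hi, hj, hz, hsum, hpi, hqj, hzh⟩ := sign_partition h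
  have k1 : p * (i * f x + c) ≤ p * i * pn μ ((x : N) + h • v) := by
    have := mul_le_mul_of_nonneg_left (hc1 (i • x)) hp
    rw [LinearPMap.map_smul, smul_eq_mul] at this
    refine this.trans_eq ?_
    rw [← pn_smul_of_nonneg hp, ← pn_smul_of_nonneg (mul_nonneg hp hi), smul_add, smul_add,
      smul_smul, hpi, Submodule.coe_smul, smul_smul]
  have k2 : q * (j * f x - c) ≤ q * j * pn μ ((x : N) + h • v) := by
    have := mul_le_mul_of_nonneg_left (hc2 (j • x)) hq
    rw [LinearPMap.map_smul, smul_eq_mul] at this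
    refine this.trans_eq ?_
    rw [← pn_smul_of_nonneg hq, ← pn_smul_of_nonneg (mul_nonneg hq hj), smul_add, smul_sub,
      smul_smul, hqj, Submodule.coe_smul, smul_smul, neg_smul, sub_eq_add_neg]
  have k3 : z * f x ≤ z * pn μ ((x : N) + h • v) := by
    have := hf (z • x)
    rw [LinearPMap.map_smul, smul_eq_mul] at this
    refine this.trans_eq ?_
    rw [← pn_smul_of_nonneg hz, smul_add, smul_smul, hzh, zero_smul, add_zero,
      Submodule.coe_smul]
  have hh : p - q = h := by
    have : (p * i + q * j + z) * h = h := by rw [hsum, one_mul]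
    rw [add_mul, add_mul, hpi, hqj, hzh, add_zero, ← sub_eq_add_neg] at this
    exact this
  calc f x + h * c = (p * i + q * j + z) * f x + (p - q) * c := by rw [hsum, one_mul, hh]
    _ = p * (i * f x + c) + q * (j * f x - c) + z * f x := by ring
    _ ≤ p * i * pn μ ((x : N) + h • v) + q * j * pn μ ((x : N) + h • v)
        + z * pn μ ((x : N) + h • v) := add_le_add (add_le_add k1 k2) k3
    _ = (p * i + q * j + z) * pn μ ((x : N) + h • v) := by ring
    _ = pn μ ((x : N) + h • v) := by rw [hsum, one_mul]

lemma hb_step (f : N →ₗ.[L0 μ] L0 μ) (hf : ∀ x : f.domain, f x ≤ pn μ (x : N)) (v : N) :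
    ∃ g : N →ₗ.[L0 μ] L0 μ, f ≤ g ∧ v ∈ g.domain ∧ ∀ x : g.domain, g x ≤ pn μ (x : N) := by
  obtain ⟨c, hc⟩ := hb_const f hf v
  -- the bound forces `f x + h c = 0` whenever `x + h v = 0`
  have hwd : ∀ (x : f.domain) (h : L0 μ), (x : N) + h • v = 0 → f x + h * c = 0 := by
    intro x h hx
    have hz : pn μ (0 : N) = 0 := pn_eq_zero.2 rfl
    refine le_antisymm ?_ ?_
    · have := hc x h
      rwa [hx, hz] at this
    · have := hc (-x) (-h)
      rw [LinearPMap.map_neg, Submodule.coe_neg, neg_smul, ← neg_add, hx, neg_zero, hz, neg_mul,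
        ← neg_add] at this
      exact neg_nonpos.1 this
  have H : ∀ h : L0 μ, h • v = 0 → (RingHom.id (L0 μ)) h • c = 0 := by
    intro h hv
    have := hwd 0 h (by rw [hv, Submodule.coe_zero, add_zero])
    rwa [LinearPMap.map_zero, zero_add] at this
  set s := LinearPMap.mkSpanSingleton' (σ := RingHom.id (L0 μ)) v c H with hs
  have hsv : ∀ (h : L0 μ) (hy : h • v ∈ s.domain), s ⟨h • v, hy⟩ = h * c := fun h hy =>
    LinearPMap.mkSpanSingleton'_apply v c H h hy
  have Hc : ∀ (x : f.domain) (y : s.domain), (x : N) = y → f x = s y := by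
    rintro x ⟨y, hy⟩ hxy
    obtain ⟨h, rfl⟩ := Submodule.mem_span_singleton.1 hy
    rw [hsv]
    have := hwd x (-h) (by rw [hxy, neg_smul, add_neg_cancel])
    rw [neg_mul, add_neg_eq_zero] at this
    exact this
  refine ⟨f.sup s Hc, LinearPMap.left_le_sup f s Hc, ?_, ?_⟩
  · exact (le_sup_right : s.domain ≤ f.domain ⊔ s.domain) (Submodule.mem_span_singleton_self v)
  · rintro ⟨z, hz⟩
    obtain ⟨x, hx, y, hy, rfl⟩ := Submodule.mem_sup.1 hz
    obtain ⟨h, rfl⟩ := Submodule.mem_span_singleton.1 hy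
    have h1 := LinearPMap.sup_apply Hc ⟨x, hx⟩ ⟨h • v, hy⟩ ⟨x + h • v, hz⟩ rfl
    rw [hsv] at h1
    exact h1.le.trans (hc ⟨x, hx⟩ h)

/-- Hahn–Banach: every element of a Banach `L⁰`-module is normed by an element of the unit disc
of the dual. -/
lemma exists_norming (w : N) :
    ∃ η : N →ₗ[L0 μ] L0 μ, InDualDisc μ η ∧ η w = pn μ w := by
  have H : ∀ h : L0 μ, h • w = 0 → (RingHom.id (L0 μ)) h • pn μ w = 0 := by
    intro h hw
    have h1 : |h * pn μ w| = 0 := by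
      rw [L0_abs_mul, abs_of_nonneg (pn_nonneg w), ← pn_smul, pn_eq_zero, hw]
    exact eq_zero_of_abs h1
  set p := LinearPMap.mkSpanSingleton' (σ := RingHom.id (L0 μ)) w (pn μ w) H with hp
  set S : Set (N →ₗ.[L0 μ] L0 μ) := {f | ∀ x : f.domain, f x ≤ pn μ (x : N)} with hS
  have hpS : p ∈ S := by
    rintro ⟨y, hy⟩
    obtain ⟨h, rfl⟩ := Submodule.mem_span_singleton.1 hy
    have h1 : p ⟨h • w, hy⟩ = h * pn μ w := LinearPMap.mkSpanSingleton'_apply w (pn μ w) H h hy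
    rw [h1, pn_smul]
    exact mul_le_mul_of_nonneg_right (le_abs_self h) (pn_nonneg w)
  have hchain : ∀ c, c ⊆ S → IsChain (· ≤ ·) c → ∀ y ∈ c, ∃ ub ∈ S, ∀ z ∈ c, z ≤ ub := by
    intro c hcs c_chain y hy
    have hcd : DirectedOn (· ≤ ·) c := c_chain.directedOn
    refine ⟨LinearPMap.sSup c hcd, ?_, fun _ ↦ LinearPMap.le_sSup hcd⟩
    rintro ⟨x, hx⟩
    obtain ⟨f, hfc, hfx⟩ := (LinearPMap.mem_domain_sSup_iff ⟨y, hy⟩ hcd).1 hx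
    have h1 := LinearPMap.sSup_apply hcd hfc ⟨x, hfx⟩
    have h2 := hcs hfc ⟨x, hfx⟩
    rw [← h1] at h2
    exact h2
  obtain ⟨q, hpq, hqS, hq⟩ := zorn_le_nonempty₀ S hchain p hpS
  have htop : ∀ v : N, v ∈ q.domain := by
    intro v
    obtain ⟨g, hqg, hv, hg⟩ := hb_step q hqS v
    exact (hq hg hqg).1 hv
  refine ⟨q.toFun ∘ₗ LinearMap.codRestrict q.domain LinearMap.id htop, fun v => ?_, ?_⟩
  · refine abs_le'.2 ⟨hqS ⟨v, htop v⟩, ?_⟩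
    have h1 := hqS (-⟨v, htop v⟩)
    rw [LinearPMap.map_neg, Submodule.coe_neg, pn_neg] at h1
    exact h1
  · have h1 : p ⟨w, Submodule.mem_span_singleton_self w⟩ = pn μ w :=
      LinearPMap.mkSpanSingleton'_apply_self _ _ _ _
    rw [← h1]
    exact (hpq.2 rfl).symm

end HahnBanach

/-! ### Extension of bounded operators by density -/

section Extension

variable {μ : Measure X} [SFinite μ]
variable {A : Type*} [AddCommGroup A] [Module (L0 μ) A]
variable {E : Type*} [AddCommGroup E] [Module (L0 μ) E] [BanachMod μ E]
variable {N : Type*} [AddCommGroup N] [Module (L0 μ) N] [BanachMod μ N]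

lemma exists_approx {e : A →ₗ[L0 μ] E}
    (hd : ∀ p : E, ∀ ε : ℝ, 0 < ε → ∃ a : A, dM μ (e a) p < ε) (p : E) :
    ∃ a : ℕ → A, Null μ (fun n => pn μ (e (a n) - p)) := by
  choose a ha using fun n : ℕ => hd p (1 / ((n : ℝ) + 1)) Nat.one_div_pos_of_nat
  exact ⟨a, squeeze_zero (fun n => dL0_nonneg _) (fun n => (ha n).le)
    tendsto_one_div_add_atTop_nhds_zero_nat⟩

lemma exists_lim {u : ℕ → N} {r : ℕ → L0 μ} (hr : Null μ r)
    (h : ∀ m n, pn μ (u m - u n) ≤ r m + r n) :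
    ∃ y : N, Null μ (fun n => pn μ (u n - y)) := by
  refine BanachMod.complete (μ := μ) u fun ε hε => ?_
  obtain ⟨K, hK⟩ := eventually_atTop.1 (Tendsto.eventually hr (gt_mem_nhds (half_pos hε)))
  refine ⟨K, fun m hm n hn => ?_⟩
  have h1 := dL0_mono (pn_nonneg (μ := μ) (u m - u n)) (h m n)
  have h2 := dL0_add_le (r m) (r n)
  have h3 := hK m hm
  have h4 := hK n hn
  change dL0 μ (pn μ (u m - u n)) 0 < ε
  linarith

/-- Additive maps on `E` with an `L⁰`-bound are determined by their values on a dense image. -/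
lemma additive_ext {e : A →ₗ[L0 μ] E}
    (hd : ∀ p : E, ∀ ε : ℝ, 0 < ε → ∃ a : A, dM μ (e a) p < ε) {S₁ S₂ : E → N} {g₁ g₂ : L0 μ}
    (h₁ : ∀ p q, S₁ (p + q) = S₁ p + S₁ q) (h₂ : ∀ p q, S₂ (p + q) = S₂ p + S₂ q)
    (b₁ : ∀ p, pn μ (S₁ p) ≤ pn μ p * g₁) (b₂ : ∀ p, pn μ (S₂ p) ≤ pn μ p * g₂)
    (he : ∀ a, S₁ (e a) = S₂ (e a)) (p : E) : S₁ p = S₂ p := by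
  obtain ⟨a, ha⟩ := exists_approx hd p
  rw [← sub_eq_zero]
  refine ((ha.mul g₁).add (ha.mul g₂)).eq_zero (μ := μ) fun n => ?_
  have k1 : S₁ (p - e (a n)) + S₁ (e (a n)) = S₁ p := by rw [← h₁, sub_add_cancel]
  have k2 : S₂ (p - e (a n)) + S₂ (e (a n)) = S₂ p := by rw [← h₂, sub_add_cancel]
  have k3 : S₁ p - S₂ p = S₁ (p - e (a n)) + -S₂ (p - e (a n)) := by
    rw [← k1, ← k2, he]
    abel
  rw [k3]
  refine (pn_add_le _ _).trans (add_le_add ?_ ?_)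
  · rw [pn_sub_comm]
    exact b₁ _
  · rw [pn_neg, pn_sub_comm]
    exact b₂ _

/-- Existence of the extension of a bounded operator from a dense image. -/
lemma exists_extension {e : A →ₗ[L0 μ] E}
    (hd : ∀ p : E, ∀ ε : ℝ, 0 < ε → ∃ a : A, dM μ (e a) p < ε) (T : A →ₗ[L0 μ] N) {g : L0 μ}
    (hT : ∀ a, pn μ (T a) ≤ pn μ (e a) * g) (hg : 0 ≤ g) :
    ∃ S : E →ₗ[L0 μ] N, (∀ a, S (e a) = T a) ∧ ∀ p, pn μ (S p) ≤ pn μ p * g := by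
  have hT' : ∀ a b, pn μ (T a - T b) ≤ pn μ (e a - e b) * g := fun a b => by
    rw [← map_sub, ← map_sub]
    exact hT _
  have hex : ∀ p : E, ∃ y : N, ∀ a, pn μ (T a - y) ≤ pn μ (e a - p) * g := by
    intro p
    obtain ⟨a, ha⟩ := exists_approx hd p
    have hle : ∀ b c, pn μ (T b - T c) ≤ pn μ (e b - p) * g + pn μ (e c - p) * g := by
      intro b c
      refine (hT' b c).trans ?_
      rw [← add_mul, pn_sub_comm (e c) p]
      exact mul_le_mul_of_nonneg_right (pn_sub_le _ _ _) hg
    obtain ⟨y, hy⟩ := exists_lim (ha.mul g) (u := fun n => T (a n)) fun m n => hle _ _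
    refine ⟨y, fun b => ((ha.mul g).add hy).le fun n => ?_⟩
    refine (pn_sub_le _ (T (a n)) _).trans ?_
    rw [← add_assoc]
    exact add_le_add (hle _ _) le_rfl
  choose S hS using hex
  -- `S p` is pinned down by its defining estimate
  have huniq : ∀ (p : E) (y : N) (r : L0 μ),
      (∀ a : A, pn μ (T a - y) ≤ pn μ (e a - p) * r) → S p = y := by
    intro p y r hy
    obtain ⟨a, ha⟩ := exists_approx hd p
    rw [← sub_eq_zero]
    refine ((ha.mul g).add (ha.mul r)).eq_zero (μ := μ) fun n => ?_
    refine (pn_sub_le _ (T (a n)) _).trans (add_le_add ?_ (hy _))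
    rw [pn_sub_comm]
    exact hS p _
  have hadd : ∀ p q, S (p + q) = S p + S q := by
    intro p q
    obtain ⟨a, ha⟩ := exists_approx hd p
    obtain ⟨b, hb⟩ := exists_approx hd q
    rw [← sub_eq_zero]
    have hn := ((ha.add hb).mul g).add ((ha.mul g).add (hb.mul g))
    refine hn.eq_zero (μ := μ) fun n => ?_
    refine (pn_sub_le _ (T (a n + b n)) _).trans (add_le_add ?_ ?_)
    · rw [pn_sub_comm]
      refine (hS (p + q) _).trans (mul_le_mul_of_nonneg_right ?_ hg)
      rw [map_add, add_sub_add_comm]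
      exact pn_add_le _ _
    · rw [map_add, add_sub_add_comm]
      exact (pn_add_le _ _).trans (add_le_add (hS p _) (hS q _))
  have hsmul : ∀ (f : L0 μ) (p : E), S (f • p) = f • S p := by
    intro f p
    obtain ⟨a, ha⟩ := exists_approx hd p
    rw [← sub_eq_zero]
    have hn := (((ha.mul |f|).mul g).add ((ha.mul g).mul |f|))
    refine hn.eq_zero (μ := μ) fun n => ?_
    refine (pn_sub_le _ (T (f • a n)) _).trans (add_le_add ?_ ?_)
    · rw [pn_sub_comm]
      refine (hS (f • p) _).trans_eq ?_
      rw [map_smul, ← smul_sub, pn_smul, mul_comm |f|]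
    · rw [map_smul, ← smul_sub, pn_smul, mul_comm |f|]
      exact mul_le_mul_of_nonneg_right (hS p _) (abs_nonneg f)
  refine ⟨{ toFun := S, map_add' := hadd, map_smul' := hsmul }, fun a => ?_, fun p => ?_⟩
  · exact huniq _ _ g fun b => hT' b a
  · have := hS p 0
    rw [map_zero, map_zero, zero_sub, zero_sub, pn_neg, pn_neg] at this
    exact this

end Extension

/-! ### The operators `L_α` and the injective norm -/

section Operators

variable {μ : Measure X}

/-- The map `α ↦ L_α(ω)` for a fixed functional `ω`, characterized by `v ⊗ w ↦ ω(v) • w`. -/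
def Lop {M : Type*} (N : Type*) [AddCommGroup M] [Module (L0 μ) M] [AddCommGroup N]
    [Module (L0 μ) N] (ω : M →ₗ[L0 μ] L0 μ) : M ⊗[L0 μ] N →ₗ[L0 μ] N :=
  (TensorProduct.lid (L0 μ) N).toLinearMap ∘ₗ ω.rTensor N

section

variable {M N : Type*} [AddCommGroup M] [Module (L0 μ) M] [AddCommGroup N] [Module (L0 μ) N]

lemma Lop_sum (ω : M →ₗ[L0 μ] L0 μ) {n : ℕ} (v : Fin n → M) (w : Fin n → N) :
    Lop N ω (∑ i, v i ⊗ₜ[L0 μ] w i) = ∑ i, ω (v i) • w i := by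
  rw [map_sum]
  rfl

lemma left_wd {n m : ℕ} (v : Fin n → M) (w : Fin n → N) (v' : Fin m → M) (w' : Fin m → N)
    (h : (∑ i, v i ⊗ₜ[L0 μ] w i) = (∑ j, v' j ⊗ₜ[L0 μ] w' j)) (ω : M →ₗ[L0 μ] L0 μ) :
    (∑ i, ω (v i) • w i) = ∑ j, ω (v' j) • w' j := by
  rw [← Lop_sum, ← Lop_sum, h]

lemma comm_sum {n : ℕ} (v : Fin n → M) (w : Fin n → N) :
    TensorProduct.comm (L0 μ) M N (∑ i, v i ⊗ₜ[L0 μ] w i) = ∑ i, w i ⊗ₜ[L0 μ] v i := by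
  rw [map_sum]
  rfl

lemma Lop_add (ω ω' : M →ₗ[L0 μ] L0 μ) (α : M ⊗[L0 μ] N) :
    Lop N (ω + ω') α = Lop N ω α + Lop N ω' α := by
  simp [Lop, LinearMap.rTensor_add]

lemma Lop_smul (f : L0 μ) (ω : M →ₗ[L0 μ] L0 μ) (α : M ⊗[L0 μ] N) :
    Lop N (f • ω) α = f • Lop N ω α := by
  simp [Lop, LinearMap.rTensor_smul]

lemma exists_rep (α : M ⊗[L0 μ] N) :
    ∃ (n : ℕ) (v : Fin n → M) (w : Fin n → N), α = ∑ i, v i ⊗ₜ[L0 μ] w i := by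
  obtain ⟨S, rfl⟩ := TensorProduct.exists_finset α
  refine ⟨S.card, fun i => (S.equivFin.symm i).1.1, fun i => (S.equivFin.symm i).1.2, ?_⟩
  rw [← Finset.sum_coe_sort]
  exact (Equiv.sum_comp S.equivFin.symm fun i : S => i.1.1 ⊗ₜ[L0 μ] i.1.2).symm

end

variable [SigmaFinite μ]
variable {M N : Type*} [AddCommGroup M] [Module (L0 μ) M] [BanachMod μ M]
  [AddCommGroup N] [Module (L0 μ) N] [BanachMod μ N]

lemma isDual_glb_mem {ω : M →ₗ[L0 μ] L0 μ} (hω : IsDual μ ω) {d : L0 μ}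
    (hd : IsGLB (dualBddSet μ ω) d) : d ∈ dualBddSet μ ω :=
  ⟨hd.2 fun _ hg => hg.1, fun v =>
    le_glb_mul (fun _ hg => hg.1) hω hd (pn_nonneg v) fun _ hg => hg.2 v⟩

lemma isDual_exists_glb {ω : M →ₗ[L0 μ] L0 μ} (hω : IsDual μ ω) :
    ∃ d, IsGLB (dualBddSet μ ω) d :=
  exists_isGLB hω ⟨0, fun _ hg => hg.1⟩

lemma InDualDisc.one_mem {ω : M →ₗ[L0 μ] L0 μ} (hω : InDualDisc μ ω) : 1 ∈ dualBddSet μ ω :=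
  ⟨zero_le_one, fun v => by rw [one_mul]; exact hω v⟩

/-- Normalization: a bounded functional is its bound times an element of the unit disc. -/
lemma exists_disc {ω : M →ₗ[L0 μ] L0 μ} {d : L0 μ} (hd : d ∈ dualBddSet μ ω) :
    ∃ ω' : M →ₗ[L0 μ] L0 μ, InDualDisc μ ω' ∧ ω = d • ω' := by
  refine ⟨pinv d • ω, fun v => ?_, ?_⟩
  · rw [LinearMap.smul_apply, smul_eq_mul, L0_abs_mul, abs_of_nonneg (pinv_nonneg hd.1)]
    calc pinv d * |ω v| ≤ pinv d * (d * pn μ v) :=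
          mul_le_mul_of_nonneg_left (hd.2 v) (pinv_nonneg hd.1)
      _ = (d * pinv d) * pn μ v := by ring
      _ ≤ 1 * pn μ v := mul_le_mul_of_nonneg_right (mul_pinv_le_one d) (pn_nonneg v)
      _ = pn μ v := one_mul _
  · ext1 v
    rw [LinearMap.smul_apply, LinearMap.smul_apply, smul_eq_mul, smul_eq_mul, ← mul_assoc]
    have hz : 0 ≤ 1 - d * pinv d := sub_nonneg.2 (mul_pinv_le_one d)
    have h0 : |(1 - d * pinv d) * ω v| = 0 := by
      refine le_antisymm ?_ (abs_nonneg _)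
      rw [L0_abs_mul, abs_of_nonneg hz]
      refine (mul_le_mul_of_nonneg_left (hd.2 v) hz).trans_eq ?_
      have : (1 - d * pinv d) * (d * pn μ v) = (d - d * pinv d * d) * pn μ v := by ring
      rw [this, pinv_mul_self_mul, sub_self, zero_mul]
    have h1 := eq_zero_of_abs h0
    rw [sub_mul, one_mul, sub_eq_zero] at h1
    exact h1

variable {E : Type*} [AddCommGroup E] [Module (L0 μ) E] [BanachMod μ E]

/-- `|L_α(ω)| ≤ |α|_ε d` for every bound `d` of `ω`: test `L_α(ω / d)` against a norming
functional. -/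
lemma pn_Lop_le {e : M ⊗[L0 μ] N →ₗ[L0 μ] E} (hE : IsEpsTensor μ M N E e)
    {ω : M →ₗ[L0 μ] L0 μ} {d : L0 μ} (hd : d ∈ dualBddSet μ ω) (α : M ⊗[L0 μ] N) :
    pn μ (Lop N ω α) ≤ pn μ (e α) * d := by
  obtain ⟨ω', hω', rfl⟩ := exists_disc hd
  rw [Lop_smul, pn_smul_of_nonneg hd.1, mul_comm]
  refine mul_le_mul_of_nonneg_right ?_ hd.1
  obtain ⟨η, hη, hηw⟩ := exists_norming (μ := μ) (Lop N ω' α)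
  obtain ⟨n, v, w, hα⟩ := exists_rep α
  refine (hE.pn_emb α).1 ⟨n, v, w, ω', η, hω', hη, hα, ?_⟩
  have : ∑ i, ω' (v i) * η (w i) = η (Lop N ω' α) := by
    rw [hα, Lop_sum, map_sum]
    simp only [map_smul, smul_eq_mul]
  rw [this, hηw, abs_of_nonneg (pn_nonneg _)]

/-- A common bound of `|L_α(ω)|` over the unit disc bounds `|α|_ε`. -/
lemma pn_le_of_disc {e : M ⊗[L0 μ] N →ₗ[L0 μ] E} (hE : IsEpsTensor μ M N E e)
    (α : M ⊗[L0 μ] N) {b : L0 μ}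
    (hb : ∀ ω : M →ₗ[L0 μ] L0 μ, InDualDisc μ ω → pn μ (Lop N ω α) ≤ b) :
    pn μ (e α) ≤ b := by
  refine (hE.pn_emb α).2 ?_
  rintro _ ⟨n, v, w, ω, η, hω, hη, hα, rfl⟩
  have : ∑ i, ω (v i) * η (w i) = η (Lop N ω α) := by
    rw [hα, Lop_sum, map_sum]
    simp only [map_smul, smul_eq_mul]
  rw [this]
  exact (hη _).trans (hb ω hω)

/-- The extension of `α ↦ L_α(ω)` to the injective tensor product, for each dual element `ω`. -/
lemma exists_Lext {e : M ⊗[L0 μ] N →ₗ[L0 μ] E} (hE : IsEpsTensor μ M N E e)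
    (ω : {ω : M →ₗ[L0 μ] L0 μ // IsDual μ ω}) :
    ∃ S : E →ₗ[L0 μ] N, (∀ α, S (e α) = Lop N ω.1 α) ∧
      ∀ d ∈ dualBddSet μ ω.1, ∀ p, pn μ (S p) ≤ pn μ p * d := by
  obtain ⟨d, hd⟩ := isDual_exists_glb ω.2
  have hd' := isDual_glb_mem ω.2 hd
  obtain ⟨S, h1, h2⟩ := exists_extension hE.dense (Lop N ω.1) (pn_Lop_le hE hd') hd'.1
  exact ⟨S, h1, fun g hg p => (h2 p).trans (mul_le_mul_of_nonneg_left (hd.1 hg) (pn_nonneg p))⟩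

/-- If the extensions of `L` are norm bounded by `g` at `p`, then `|p| ≤ g`. -/
lemma pn_le_of_Lext {e : M ⊗[L0 μ] N →ₗ[L0 μ] E} (hE : IsEpsTensor μ M N E e)
    {S : {ω : M →ₗ[L0 μ] L0 μ // IsDual μ ω} → E →ₗ[L0 μ] N}
    (hS : ∀ ω α, S ω (e α) = Lop N ω.1 α)
    (hSb : ∀ ω, ∀ d ∈ dualBddSet μ ω.1, ∀ p, pn μ (S ω p) ≤ pn μ p * d) {p : E} {g : L0 μ}
    (hg0 : 0 ≤ g)
    (hg : ∀ (ω : {ω : M →ₗ[L0 μ] L0 μ // IsDual μ ω}) (dω : L0 μ),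
      IsGLB (dualBddSet μ (fun v => ω.1 v)) dω → pn μ (S ω p) ≤ g * dω) :
    pn μ p ≤ g := by
  obtain ⟨a, ha⟩ := exists_approx hE.dense p
  refine (ha.add ha).le fun n => ?_
  have h1 : pn μ (e (a n)) ≤ g + pn μ (e (a n) - p) := by
    refine pn_le_of_disc hE _ fun ω hω => ?_
    have h1m := hω.one_mem
    let ω' : {ω : M →ₗ[L0 μ] L0 μ // IsDual μ ω} := ⟨ω, 1, h1m⟩
    obtain ⟨d, hd⟩ := isDual_exists_glb ω'.2
    have k1 : pn μ (S ω' p) ≤ g := by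
      refine (hg ω' d hd).trans ?_
      exact (mul_le_mul_of_nonneg_left (hd.1 h1m) hg0).trans_eq (mul_one g)
    have k2 := hSb ω' 1 h1m (e (a n) - p)
    rw [mul_one] at k2
    have k3 : Lop N ω (a n) = S ω' p + S ω' (e (a n) - p) := by
      rw [← map_add, add_sub_cancel]
      exact (hS ω' (a n)).symm
    rw [k3]
    exact (pn_add_le _ _).trans (add_le_add k1 k2)
  have h2 : pn μ p ≤ pn μ (p - e (a n)) + pn μ (e (a n)) := by
    have := pn_add_le (μ := μ) (p - e (a n)) (e (a n))
    rwa [sub_add_cancel] at this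
  rw [pn_sub_comm] at h2
  calc pn μ p ≤ pn μ (e (a n) - p) + pn μ (e (a n)) := h2
    _ ≤ pn μ (e (a n) - p) + (g + pn μ (e (a n) - p)) := by gcongr
    _ = g + (pn μ (e (a n) - p) + pn μ (e (a n) - p)) := by ring

end Operators

/-! ### Symmetry of the injective tensor product -/

section Symmetry

variable {μ : Measure X} [SFinite μ]
variable {M N : Type*} [AddCommGroup M] [Module (L0 μ) M] [BanachMod μ M]
  [AddCommGroup N] [Module (L0 μ) N] [BanachMod μ N]

lemma epsReps_comm_subset (α : M ⊗[L0 μ] N) :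
    epsReps μ α ⊆ epsReps μ (TensorProduct.comm (L0 μ) M N α) := by
  rintro _ ⟨n, v, w, ω, η, hω, hη, hα, rfl⟩
  refine ⟨n, w, v, η, ω, hη, hω, by rw [hα, comm_sum], ?_⟩
  simp only [mul_comm]

lemma epsReps_comm (α : M ⊗[L0 μ] N) :
    epsReps μ (TensorProduct.comm (L0 μ) M N α) = epsReps μ α := by
  refine Subset.antisymm ?_ (epsReps_comm_subset α)
  have h := epsReps_comm_subset (TensorProduct.comm (L0 μ) M N α)
  rwa [TensorProduct.comm_comm] at h

lemma IsEpsTensor.symm {E : Type*} [AddCommGroup E] [Module (L0 μ) E] [BanachMod μ E]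
    {e : M ⊗[L0 μ] N →ₗ[L0 μ] E} (hE : IsEpsTensor μ M N E e) :
    IsEpsTensor μ N M E (e ∘ₗ (TensorProduct.comm (L0 μ) N M).toLinearMap) where
  pn_emb α := by
    rw [← epsReps_comm]
    exact hE.pn_emb _
  dense p ε hε := by
    obtain ⟨α, hα⟩ := hE.dense p ε hε
    refine ⟨TensorProduct.comm (L0 μ) M N α, ?_⟩
    simpa using hα

end Symmetry

/-! ### The left operators -/

section Left

variable {μ : Measure X} [SigmaFinite μ]
variable {M N E : Type*} [AddCommGroup M] [Module (L0 μ) M] [BanachMod μ M]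
  [AddCommGroup N] [Module (L0 μ) N] [BanachMod μ N]
  [AddCommGroup E] [Module (L0 μ) E] [BanachMod μ E]

/-- The norm identity `|L_α| = |α|_ε`, the infimum being attained. -/
lemma left_norm {e : M ⊗[L0 μ] N →ₗ[L0 μ] E} (hE : IsEpsTensor μ M N E e)
    (n : ℕ) (v : Fin n → M) (w : Fin n → N) (b : L0 μ)
    (hb : IsLUB (epsReps μ (∑ i, v i ⊗ₜ[L0 μ] w i)) b) :
    b ∈ {g : L0 μ | 0 ≤ g ∧ ∀ (ω : M →ₗ[L0 μ] L0 μ) (dω : L0 μ), IsDual μ ω →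
        IsGLB (dualBddSet μ ⇑ω) dω → pn μ (∑ i, ω (v i) • w i) ≤ g * dω} ∧
    IsGLB {g : L0 μ | 0 ≤ g ∧ ∀ (ω : M →ₗ[L0 μ] L0 μ) (dω : L0 μ), IsDual μ ω →
        IsGLB (dualBddSet μ ⇑ω) dω → pn μ (∑ i, ω (v i) • w i) ≤ g * dω} b := by
  obtain rfl := hb.unique (hE.pn_emb _)
  have hmem : pn μ (e (∑ i, v i ⊗ₜ[L0 μ] w i)) ∈
      {g : L0 μ | 0 ≤ g ∧ ∀ (ω : M →ₗ[L0 μ] L0 μ) (dω : L0 μ), IsDual μ ω →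
        IsGLB (dualBddSet μ ⇑ω) dω → pn μ (∑ i, ω (v i) • w i) ≤ g * dω} := by
    refine ⟨pn_nonneg _, fun ω d hω hd => ?_⟩
    rw [← Lop_sum]
    exact pn_Lop_le hE (isDual_glb_mem hω hd) _
  refine ⟨hmem, fun g hg => ?_, fun g hg => hg hmem⟩
  refine pn_le_of_disc hE _ fun ω hω => ?_
  obtain ⟨d, hd⟩ := isDual_exists_glb ⟨1, hω.one_mem⟩
  rw [Lop_sum]
  refine (hg.2 ω d ⟨1, hω.one_mem⟩ hd).trans ?_
  exact (mul_le_mul_of_nonneg_left (hd.1 hω.one_mem) hg.1).trans_eq (mul_one g)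

/-- Existence and uniqueness of the norm-preserving extension of `α ↦ L_α`. -/
lemma left_ext {e : M ⊗[L0 μ] N →ₗ[L0 μ] E} (hE : IsEpsTensor μ M N E e) :
    ∃ Lext : E → {ω : M →ₗ[L0 μ] L0 μ // IsDual μ ω} → N,
        (∀ (n : ℕ) (v : Fin n → M) (w : Fin n → N)
            (ω : {ω : M →ₗ[L0 μ] L0 μ // IsDual μ ω}),
          Lext (e (∑ i, v i ⊗ₜ[L0 μ] w i)) ω = ∑ i, ω.1 (v i) • w i)
        ∧ (∀ (p q : E) (ω : {ω : M →ₗ[L0 μ] L0 μ // IsDual μ ω}),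
            Lext (p + q) ω = Lext p ω + Lext q ω)
        ∧ (∀ (f : L0 μ) (p : E) (ω : {ω : M →ₗ[L0 μ] L0 μ // IsDual μ ω}),
            Lext (f • p) ω = f • Lext p ω)
        ∧ (∀ (p : E) (ω ω' : {ω : M →ₗ[L0 μ] L0 μ // IsDual μ ω})
            (h : IsDual μ (ω.1 + ω'.1)),
            Lext p ⟨ω.1 + ω'.1, h⟩ = Lext p ω + Lext p ω')
        ∧ (∀ (p : E) (ω : {ω : M →ₗ[L0 μ] L0 μ // IsDual μ ω}) (f : L0 μ)
            (hf : IsDual μ (f • ω.1)),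
            Lext p ⟨f • ω.1, hf⟩ = f • Lext p ω)
        ∧ (∀ p : E, IsGLB {g : L0 μ | 0 ≤ g ∧
            ∀ (ω : {ω : M →ₗ[L0 μ] L0 μ // IsDual μ ω}) (dω : L0 μ),
              IsGLB (dualBddSet μ (fun v => ω.1 v)) dω → pn μ (Lext p ω) ≤ g * dω}
            (pn μ p))
        ∧ (∀ L₂ : E → {ω : M →ₗ[L0 μ] L0 μ // IsDual μ ω} → N,
            (∀ (n : ℕ) (v : Fin n → M) (w : Fin n → N)
                (ω : {ω : M →ₗ[L0 μ] L0 μ // IsDual μ ω}),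
              L₂ (e (∑ i, v i ⊗ₜ[L0 μ] w i)) ω = ∑ i, ω.1 (v i) • w i) →
            (∀ (p q : E) (ω : {ω : M →ₗ[L0 μ] L0 μ // IsDual μ ω}),
              L₂ (p + q) ω = L₂ p ω + L₂ q ω) →
            (∀ (p : E) (ω : {ω : M →ₗ[L0 μ] L0 μ // IsDual μ ω}) (dω : L0 μ),
              IsGLB (dualBddSet μ (fun v => ω.1 v)) dω → pn μ (L₂ p ω) ≤ pn μ p * dω) →
            L₂ = Lext) := by
  choose S hS hSb using exists_Lext hE
  refine ⟨fun p ω => S ω p, fun n v w ω => ?_, fun p q ω => map_add _ _ _,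
    fun f p ω => map_smul _ _ _, fun p ω ω' h => ?_, fun p ω f hf => ?_, fun p => ⟨?_, ?_⟩,
    fun L₂ h1 h2 h3 => ?_⟩
  · exact (hS ω _).trans (Lop_sum ω.1 v w)
  · obtain ⟨d₁, hd₁⟩ := ω.2
    obtain ⟨d₂, hd₂⟩ := ω'.2
    obtain ⟨d₃, hd₃⟩ := id h
    refine additive_ext hE.dense (S₁ := S ⟨ω.1 + ω'.1, h⟩) (S₂ := fun p => S ω p + S ω' p)
      (g₁ := d₃) (g₂ := d₁ + d₂) (map_add _) (fun p q => ?_) (hSb _ _ hd₃) (fun p => ?_)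
      (fun α => ?_) p
    · rw [map_add, map_add, add_add_add_comm]
    · rw [mul_add]
      exact (pn_add_le _ _).trans (add_le_add (hSb ω _ hd₁ p) (hSb ω' _ hd₂ p))
    · rw [hS, hS, hS, Lop_add]
  · obtain ⟨d₁, hd₁⟩ := ω.2
    obtain ⟨d₃, hd₃⟩ := id hf
    refine additive_ext hE.dense (S₁ := S ⟨f • ω.1, hf⟩) (S₂ := fun p => f • S ω p)
      (g₁ := d₃) (g₂ := d₁ * |f|) (map_add _) (fun p q => ?_) (hSb _ _ hd₃) (fun p => ?_)
      (fun α => ?_) p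
    · rw [map_add, smul_add]
    · rw [pn_smul, mul_comm |f|, ← mul_assoc]
      exact mul_le_mul_of_nonneg_right (hSb ω _ hd₁ p) (abs_nonneg f)
    · rw [hS, hS, Lop_smul]
  · intro g hg
    exact pn_le_of_Lext hE hS hSb hg.1 hg.2
  · intro g hg
    exact hg ⟨pn_nonneg p, fun ω d hd => hSb ω d (isDual_glb_mem ω.2 hd) p⟩
  · funext p ω
    obtain ⟨d, hd⟩ := isDual_exists_glb ω.2
    refine additive_ext hE.dense (S₁ := fun p => L₂ p ω) (S₂ := S ω) (g₁ := d) (g₂ := d)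
      (fun p q => h2 p q ω) (map_add _) (fun p => h3 p ω d hd)
      (hSb ω d (isDual_glb_mem ω.2 hd)) (fun α => ?_) p
    obtain ⟨n, v, w, rfl⟩ := exists_rep α
    rw [hS, Lop_sum, h1]

end Left

set_option maxHeartbeats 1000000 in

/-- For a tensor `α = ∑_{i=1}^n v_i ⊗ w_i ∈ ℳ ⊗ 𝒩`, the operators
`L_α(ω) := ∑ ω(v_i) • w_i` and `R_α(η) := ∑ η(w_i) • v_i` are well defined (independent of
the representation), belong to `Hom(ℳ*;𝒩)` resp. `Hom(𝒩*;ℳ)` with `|L_α| = |R_α| = |α|_ε`,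
and extend uniquely to pointwise-norm-preserving homomorphisms on `ℳ ⊗̂_ε 𝒩` (realized by
`E`). The pointwise norm of an element of `Hom(ℳ*;𝒩)` is the infimum of the set of bounds
`g` with `|L(ω)| ≤ g |ω|` for all `ω ∈ ℳ*`, `|ω|` being the infimum of `dualBddSet μ ω`. -/
theorem left_right_operators_of_tensors
    (μ : Measure X) [SigmaFinite μ]
    (M : Type*) [AddCommGroup M] [Module (L0 μ) M] [BanachMod μ M]
    (N : Type*) [AddCommGroup N] [Module (L0 μ) N] [BanachMod μ N]
    (E : Type*) [AddCommGroup E] [Module (L0 μ) E] [BanachMod μ E]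
    (e : M ⊗[L0 μ] N →ₗ[L0 μ] E) (hE : IsEpsTensor μ M N E e) :
    -- (1) `L_α` is well defined
    (∀ (n m : ℕ) (v : Fin n → M) (w : Fin n → N) (v' : Fin m → M) (w' : Fin m → N),
      (∑ i, v i ⊗ₜ[L0 μ] w i) = (∑ j, v' j ⊗ₜ[L0 μ] w' j) →
      ∀ ω : M →ₗ[L0 μ] L0 μ, IsDual μ ω → (∑ i, ω (v i) • w i) = ∑ j, ω (v' j) • w' j)
    -- (2) `R_α` is well defined
    ∧ (∀ (n m : ℕ) (v : Fin n → M) (w : Fin n → N) (v' : Fin m → M) (w' : Fin m → N),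
      (∑ i, v i ⊗ₜ[L0 μ] w i) = (∑ j, v' j ⊗ₜ[L0 μ] w' j) →
      ∀ η : N →ₗ[L0 μ] L0 μ, IsDual μ η → (∑ i, η (w i) • v i) = ∑ j, η (w' j) • v' j)
    -- (3) `L_α ∈ Hom(ℳ*;𝒩)` and `|L_α| = |α|_ε`
    ∧ (∀ (n : ℕ) (v : Fin n → M) (w : Fin n → N) (b : L0 μ),
        IsLUB (epsReps μ (∑ i, v i ⊗ₜ[L0 μ] w i)) b →
        b ∈ {g : L0 μ | 0 ≤ g ∧ ∀ (ω : M →ₗ[L0 μ] L0 μ) (dω : L0 μ), IsDual μ ω →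
            IsGLB (dualBddSet μ ⇑ω) dω → pn μ (∑ i, ω (v i) • w i) ≤ g * dω} ∧
        IsGLB {g : L0 μ | 0 ≤ g ∧ ∀ (ω : M →ₗ[L0 μ] L0 μ) (dω : L0 μ), IsDual μ ω →
            IsGLB (dualBddSet μ ⇑ω) dω → pn μ (∑ i, ω (v i) • w i) ≤ g * dω} b)
    -- (4) `R_α ∈ Hom(𝒩*;ℳ)` and `|R_α| = |α|_ε`
    ∧ (∀ (n : ℕ) (v : Fin n → M) (w : Fin n → N) (b : L0 μ),
        IsLUB (epsReps μ (∑ i, v i ⊗ₜ[L0 μ] w i)) b →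
        b ∈ {g : L0 μ | 0 ≤ g ∧ ∀ (η : N →ₗ[L0 μ] L0 μ) (dη : L0 μ), IsDual μ η →
            IsGLB (dualBddSet μ ⇑η) dη → pn μ (∑ i, η (w i) • v i) ≤ g * dη} ∧
        IsGLB {g : L0 μ | 0 ≤ g ∧ ∀ (η : N →ₗ[L0 μ] L0 μ) (dη : L0 μ), IsDual μ η →
            IsGLB (dualBddSet μ ⇑η) dη → pn μ (∑ i, η (w i) • v i) ≤ g * dη} b)
    -- (5) unique pointwise-norm-preserving extension of `α ↦ L_α` to `ℳ ⊗̂_ε 𝒩`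
    ∧ (∃ Lext : E → {ω : M →ₗ[L0 μ] L0 μ // IsDual μ ω} → N,
        (∀ (n : ℕ) (v : Fin n → M) (w : Fin n → N)
            (ω : {ω : M →ₗ[L0 μ] L0 μ // IsDual μ ω}),
          Lext (e (∑ i, v i ⊗ₜ[L0 μ] w i)) ω = ∑ i, ω.1 (v i) • w i)
        ∧ (∀ (p q : E) (ω : {ω : M →ₗ[L0 μ] L0 μ // IsDual μ ω}),
            Lext (p + q) ω = Lext p ω + Lext q ω)
        ∧ (∀ (f : L0 μ) (p : E) (ω : {ω : M →ₗ[L0 μ] L0 μ // IsDual μ ω}),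
            Lext (f • p) ω = f • Lext p ω)
        ∧ (∀ (p : E) (ω ω' : {ω : M →ₗ[L0 μ] L0 μ // IsDual μ ω})
            (h : IsDual μ (ω.1 + ω'.1)),
            Lext p ⟨ω.1 + ω'.1, h⟩ = Lext p ω + Lext p ω')
        ∧ (∀ (p : E) (ω : {ω : M →ₗ[L0 μ] L0 μ // IsDual μ ω}) (f : L0 μ)
            (hf : IsDual μ (f • ω.1)),
            Lext p ⟨f • ω.1, hf⟩ = f • Lext p ω)
        ∧ (∀ p : E, IsGLB {g : L0 μ | 0 ≤ g ∧
            ∀ (ω : {ω : M →ₗ[L0 μ] L0 μ // IsDual μ ω}) (dω : L0 μ),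
              IsGLB (dualBddSet μ (fun v => ω.1 v)) dω → pn μ (Lext p ω) ≤ g * dω}
            (pn μ p))
        ∧ (∀ L₂ : E → {ω : M →ₗ[L0 μ] L0 μ // IsDual μ ω} → N,
            (∀ (n : ℕ) (v : Fin n → M) (w : Fin n → N)
                (ω : {ω : M →ₗ[L0 μ] L0 μ // IsDual μ ω}),
              L₂ (e (∑ i, v i ⊗ₜ[L0 μ] w i)) ω = ∑ i, ω.1 (v i) • w i) →
            (∀ (p q : E) (ω : {ω : M →ₗ[L0 μ] L0 μ // IsDual μ ω}),
              L₂ (p + q) ω = L₂ p ω + L₂ q ω) →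
            (∀ (p : E) (ω : {ω : M →ₗ[L0 μ] L0 μ // IsDual μ ω}) (dω : L0 μ),
              IsGLB (dualBddSet μ (fun v => ω.1 v)) dω → pn μ (L₂ p ω) ≤ pn μ p * dω) →
            L₂ = Lext))
    -- (6) unique pointwise-norm-preserving extension of `α ↦ R_α` to `ℳ ⊗̂_ε 𝒩`
    ∧ (∃ Rext : E → {η : N →ₗ[L0 μ] L0 μ // IsDual μ η} → M,
        (∀ (n : ℕ) (v : Fin n → M) (w : Fin n → N)
            (η : {η : N →ₗ[L0 μ] L0 μ // IsDual μ η}),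
          Rext (e (∑ i, v i ⊗ₜ[L0 μ] w i)) η = ∑ i, η.1 (w i) • v i)
        ∧ (∀ (p q : E) (η : {η : N →ₗ[L0 μ] L0 μ // IsDual μ η}),
            Rext (p + q) η = Rext p η + Rext q η)
        ∧ (∀ (f : L0 μ) (p : E) (η : {η : N →ₗ[L0 μ] L0 μ // IsDual μ η}),
            Rext (f • p) η = f • Rext p η)
        ∧ (∀ (p : E) (η η' : {η : N →ₗ[L0 μ] L0 μ // IsDual μ η})
            (h : IsDual μ (η.1 + η'.1)),
            Rext p ⟨η.1 + η'.1, h⟩ = Rext p η + Rext p η')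
        ∧ (∀ (p : E) (η : {η : N →ₗ[L0 μ] L0 μ // IsDual μ η}) (f : L0 μ)
            (hf : IsDual μ (f • η.1)),
            Rext p ⟨f • η.1, hf⟩ = f • Rext p η)
        ∧ (∀ p : E, IsGLB {g : L0 μ | 0 ≤ g ∧
            ∀ (η : {η : N →ₗ[L0 μ] L0 μ // IsDual μ η}) (dη : L0 μ),
              IsGLB (dualBddSet μ (fun w => η.1 w)) dη → pn μ (Rext p η) ≤ g * dη}
            (pn μ p))
        ∧ (∀ R₂ : E → {η : N →ₗ[L0 μ] L0 μ // IsDual μ η} → M,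
            (∀ (n : ℕ) (v : Fin n → M) (w : Fin n → N)
                (η : {η : N →ₗ[L0 μ] L0 μ // IsDual μ η}),
              R₂ (e (∑ i, v i ⊗ₜ[L0 μ] w i)) η = ∑ i, η.1 (w i) • v i) →
            (∀ (p q : E) (η : {η : N →ₗ[L0 μ] L0 μ // IsDual μ η}),
              R₂ (p + q) η = R₂ p η + R₂ q η) →
            (∀ (p : E) (η : {η : N →ₗ[L0 μ] L0 μ // IsDual μ η}) (dη : L0 μ),
              IsGLB (dualBddSet μ (fun w => η.1 w)) dη → pn μ (R₂ p η) ≤ pn μ p * dη) →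
            R₂ = Rext)) := by
  have hE' := hE.symm
  have he : ∀ (n : ℕ) (v : Fin n → M) (w : Fin n → N),
      (e ∘ₗ (TensorProduct.comm (L0 μ) N M).toLinearMap) (∑ i, w i ⊗ₜ[L0 μ] v i) =
        e (∑ i, v i ⊗ₜ[L0 μ] w i) := fun n v w => congrArg e (comm_sum w v)
  refine ⟨fun n m v w v' w' h ω _ => left_wd v w v' w' h ω,
    fun n m v w v' w' h η _ => left_wd w v w' v' ?_ η, left_norm hE,
    fun n v w b hb => left_norm hE' n w v b ?_, left_ext hE, ?_⟩
  · rw [← comm_sum v w, ← comm_sum v' w', h]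
  · rwa [← comm_sum v w, epsReps_comm]
  · obtain ⟨R, h1, h2, h3, h4, h5, h6, h7⟩ := left_ext hE'
    refine ⟨R, fun n v w η => ?_, h2, h3, h4, h5, h6, fun R₂ k1 k2 k3 =>
      h7 R₂ (fun n w v η => ?_) k2 k3⟩
    · rw [← he, h1]
    · rw [he, k1]

end Paper
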